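/- Let k ≥ 1 and n be integers with 2k < n, and let Σ ⊂ ℙ⁴(ℂ) be a finite set which is the set-theoretic intersection of hypersurfaces of degree k, i.e. Σ is the set of common zeros in ℙ⁴(ℂ) of some family of homogeneous polynomials of degree k in ℂ[x_0,…,x_4]. Then for every point P ∈ Σ there exists a homogeneous polynomial of degree 2n−5 in ℂ[x_0,…,x_4] that vanishes at every point of Σ \ {P} and does not vanish at P. -/

import Mathlib

open MvPolynomial

noncomputable section

/-- The projective space `ℙ^N(ℂ)`. -/
abbrev ProjPt (N : ℕ) := Projectivization ℂ (Fin (N + 1) → ℂ)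

/-- A (homogeneous) polynomial vanishes at a point of projective space. -/
def VanishesAt {N : ℕ} (F : MvPolynomial (Fin (N + 1)) ℂ) (p : ProjPt N) : Prop :=
  eval p.rep F = 0

/-!
Fix a linear form `ℓ` vanishing at no point of the finite set `S`. The forms of degree `k` through
`S` and `ℓ ^ k` have no common zero in `ℙ^N`, so by Macaulay's theorem they generate every form of
degree greater than `(N + 1) * (k - 1)`. Hence a form `F` of degree `d + k` with `N * (k - 1) ≤ d`
agrees on `S` with `ℓ ^ k * c` for some form `c` of degree `d`. If `F` separates `P` from the rest
of `S`, then so does `c`, and a product of linear forms separates `P` in some large degree.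

Macaulay's theorem itself is proved by exchange. In the regular sequence of the `N + 1` variables
replace one variable after the other by a general member of the system of degree `k` forms. The
Nullstellensatz makes a general member avoid the relevant associated primes, homogeneous regular
sequences may be permuted, and comparing Hilbert functions shows that each exchange raises the top
degree of the quotient by at most `k - 1`.
-/

open DirectSum RingTheory.Sequence

open scoped Pointwise LinearAlgebra.Projectivization

section GradedRing

variable {A σ : Type*} [CommRing A] [SetLike σ A] [AddSubgroupClass σ A]
  {𝒜 : ℕ → σ} [GradedRing 𝒜]

lemma exists_sub_mul_mem_of_mem_sup_span_singleton {J : Ideal A} (hJ : J.IsHomogeneous 𝒜)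
    {m e : ℕ} {f x : A} (hf : f ∈ 𝒜 e) (hx : x ∈ 𝒜 (m + e)) (hxJ : x ∈ J ⊔ Ideal.span {f}) :
    ∃ c ∈ 𝒜 m, x - f * c ∈ J := by
  obtain ⟨j, hj, y, hy, rfl⟩ := Submodule.mem_sup.mp hxJ
  obtain ⟨c, rfl⟩ := Ideal.mem_span_singleton'.mp hy
  refine ⟨decompose 𝒜 c m, SetLike.coe_mem _, ?_⟩
  have hcomp : (decompose 𝒜 (j + c * f) (m + e) : A) - f * decompose 𝒜 c m
      = decompose 𝒜 j (m + e) := by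
    rw [decompose_add, DirectSum.add_apply, AddMemClass.coe_add, mul_comm c f,
      coe_decompose_mul_of_left_mem_of_le 𝒜 hf (Nat.le_add_left e m), Nat.add_sub_cancel]
    abel
  rw [decompose_of_mem_same 𝒜 hx] at hcomp
  exact hcomp ▸ hJ (m + e) hj

lemma decompose_mem_of_sub_mul_mem_of_lt {J : Ideal A} (hJ : J.IsHomogeneous 𝒜)
    {d e : ℕ} (hde : d < e) {f x c : A} (hf : f ∈ 𝒜 e) (hx : x - f * c ∈ J) :
    (decompose 𝒜 x d : A) ∈ J := by
  have hcomp := hJ d hx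
  rwa [decompose_sub, DirectSum.sub_apply, AddSubgroupClass.coe_sub,
    coe_decompose_mul_of_left_mem_of_not_le 𝒜 hf hde.not_ge, sub_zero] at hcomp

-- Graded Nakayama: an element infinitely divisible by `a` has no component in any degree.
lemma eq_bot_of_eq_smul_of_isHomogeneous {J : Ideal A} (hJ : J.IsHomogeneous 𝒜) {i : ℕ}
    (hi : 0 < i) {a : A} (ha : a ∈ 𝒜 i) {N : Submodule A (A ⧸ J)} (hN : N = a • N) : N = ⊥ := by
  have hpow (n : ℕ) : N = a ^ n • N := by
    induction n with
    | zero => simp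
    | succ n ih => rw [pow_succ, mul_smul, ← hN, ← ih]
  refine (Submodule.eq_bot_iff N).mpr fun y hy ↦ ?_
  obtain ⟨x, rfl⟩ := Submodule.mkQ_surjective J y
  refine (Submodule.Quotient.mk_eq_zero J).mpr ((hJ.mem_iff 𝒜).mpr fun d ↦ ?_)
  rw [hpow (d + 1)] at hy
  obtain ⟨z, -, hz⟩ := hy
  obtain ⟨c, rfl⟩ := Submodule.mkQ_surjective J z
  have hx : x - a ^ (d + 1) * c ∈ J := (Submodule.Quotient.eq J).mp hz.symm
  have hdeg : d < (d + 1) • i := Nat.le_mul_of_pos_right (d + 1) hi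
  exact decompose_mem_of_sub_mul_mem_of_lt hJ hdeg (SetLike.pow_mem_graded (d + 1) ha) hx

lemma isWeaklyRegular_perm_of_homogeneous {rs rs' : List A} (h : IsWeaklyRegular A rs)
    (hperm : rs.Perm rs') (hrs : ∀ r ∈ rs, ∃ i, 0 < i ∧ r ∈ 𝒜 i) : IsWeaklyRegular A rs' := by
  refine h.prototype_perm hperm fun a b ts hts hK ↦ ?_
  obtain ⟨i, hi, ha⟩ := hrs a (hts.subset List.mem_cons_self)
  have hhom : (Ideal.ofList ts • ⊤ : Ideal A).IsHomogeneous 𝒜 := by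
    rw [smul_eq_mul, Ideal.mul_top]
    refine Ideal.homogeneous_span 𝒜 _ fun r hr ↦ ?_
    obtain ⟨j, -, hj⟩ := hrs r (hts.subset (List.mem_cons_of_mem _ (List.mem_cons_of_mem _ hr)))
    exact ⟨j, hj⟩
  exact eq_bot_of_eq_smul_of_isHomogeneous hhom hi ha hK

end GradedRing

lemma isWeaklyRegular_concat_iff {A : Type*} [CommRing A] (rs : List A) (r : A) :
    IsWeaklyRegular A (rs ++ [r]) ↔
      IsWeaklyRegular A rs ∧ IsSMulRegular (A ⧸ Ideal.ofList rs) r := by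
  rw [isWeaklyRegular_append_iff, isWeaklyRegular_singleton_iff, smul_eq_mul, Ideal.mul_top]

section QuotientPart

variable {K A : Type*} [Field K] [CommRing A] [Algebra K A] (𝒜 : ℕ → Submodule K A)

/-- The degree `d` part of the quotient `A ⧸ J` of a graded algebra, as a subspace of `A ⧸ J`;
its dimension is the Hilbert function of `A ⧸ J` when `J` is homogeneous. -/
def quotientPart (J : Ideal A) (d : ℕ) : Submodule K (A ⧸ J) :=
  (𝒜 d).map (Ideal.Quotient.mkₐ K J).toLinearMap

variable {𝒜} {J : Ideal A} {d e : ℕ} {f : A}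

lemma mk_mem_quotientPart {x : A} (hx : x ∈ 𝒜 d) : Ideal.Quotient.mk J x ∈ quotientPart 𝒜 J d :=
  Submodule.mem_map_of_mem hx

instance [FiniteDimensional K (𝒜 d)] : FiniteDimensional K (quotientPart 𝒜 J d) := by
  unfold quotientPart
  infer_instance

lemma finrank_map_lsmul_quotientPart (hreg : IsSMulRegular (A ⧸ J) f) :
    Module.finrank K ((quotientPart 𝒜 J d).map (Algebra.lsmul K K (A ⧸ J) f)) =
      Module.finrank K (quotientPart 𝒜 J d) :=
  (Submodule.equivMapOfInjective (Algebra.lsmul K K (A ⧸ J) f) hreg _).finrank_eq.symm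

variable [GradedAlgebra 𝒜]

lemma map_lsmul_quotientPart_le (hf : f ∈ 𝒜 e) :
    (quotientPart 𝒜 J d).map (Algebra.lsmul K K (A ⧸ J) f) ≤ quotientPart 𝒜 J (d + e) := by
  rintro _ ⟨_, ⟨x, hx, rfl⟩, rfl⟩
  exact add_comm e d ▸ mk_mem_quotientPart (SetLike.mul_mem_graded hf hx)

lemma map_lsmul_quotientPart_eq_iff (hJ : J.IsHomogeneous 𝒜) (hf : f ∈ 𝒜 e) :
    (quotientPart 𝒜 J d).map (Algebra.lsmul K K (A ⧸ J) f) = quotientPart 𝒜 J (d + e) ↔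
      ∀ x ∈ 𝒜 (d + e), x ∈ J ⊔ Ideal.span {f} := by
  rw [(map_lsmul_quotientPart_le hf).ge_iff_eq.symm]
  constructor
  · intro hle x hx
    obtain ⟨_, ⟨y, -, rfl⟩, hxy⟩ := hle (mk_mem_quotientPart hx)
    have hsub : x - f * y ∈ J := Ideal.Quotient.eq.mp hxy.symm
    rw [← sub_add_cancel x (f * y)]
    exact add_mem (Ideal.mem_sup_left hsub)
      (Ideal.mem_sup_right (Ideal.mul_mem_right y _ (Ideal.mem_span_singleton_self f)))
  · rintro hle _ ⟨x, hx, rfl⟩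
    obtain ⟨c, hc, hxc⟩ := exists_sub_mul_mem_of_mem_sup_span_singleton hJ hf hx (hle x hx)
    exact ⟨_, mk_mem_quotientPart hc, (Ideal.Quotient.eq.mpr hxc).symm⟩

variable [∀ d, FiniteDimensional K (𝒜 d)]

lemma finrank_quotientPart_eq_iff (hJ : J.IsHomogeneous 𝒜) (hf : f ∈ 𝒜 e)
    (hreg : IsSMulRegular (A ⧸ J) f) :
    Module.finrank K (quotientPart 𝒜 J d) = Module.finrank K (quotientPart 𝒜 J (d + e)) ↔
      ∀ x ∈ 𝒜 (d + e), x ∈ J ⊔ Ideal.span {f} := by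
  rw [← map_lsmul_quotientPart_eq_iff hJ hf, ← finrank_map_lsmul_quotientPart hreg]
  exact ⟨Submodule.eq_of_le_of_finrank_eq (map_lsmul_quotientPart_le hf), fun h ↦ h ▸ rfl⟩

-- The Hilbert function of `A ⧸ J` is constant from `D` on because `ℓ` has degree one; hence
-- multiplication by the regular element `g` is onto as soon as its source has degree at least `D`.
lemma mem_sup_span_singleton_of_isSMulRegular (hJ : J.IsHomogeneous 𝒜) {ℓ g : A} {k D : ℕ}
    (hℓ : ℓ ∈ 𝒜 1) (hℓreg : IsSMulRegular (A ⧸ J) ℓ)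
    (hg : g ∈ 𝒜 k) (hgreg : IsSMulRegular (A ⧸ J) g)
    (hD : ∀ d > D, ∀ x ∈ 𝒜 d, x ∈ J ⊔ Ideal.span {ℓ}) (hd : D + k ≤ d) :
    ∀ x ∈ 𝒜 d, x ∈ J ⊔ Ideal.span {g} := by
  have hconst (m : ℕ) (hm : D ≤ m) :
      Module.finrank K (quotientPart 𝒜 J D) = Module.finrank K (quotientPart 𝒜 J m) := by
    induction m, hm using Nat.le_induction with
    | base => rfl
    | succ m hm ih =>
      exact ih.trans ((finrank_quotientPart_eq_iff hJ hℓ hℓreg).mpr (hD _ (Nat.lt_succ_of_le hm)))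
  obtain ⟨m, rfl⟩ := Nat.exists_eq_add_of_le' (le_of_add_le_right hd)
  refine (finrank_quotientPart_eq_iff hJ hg hgreg).mp ?_
  rw [← hconst m (by omega), ← hconst (m + k) (by omega)]

end QuotientPart

section GenericElement

variable {K : Type*} [Field K] [Infinite K]

lemma exists_mem_forall_notMem_of_not_le {E ι : Type*} [AddCommGroup E] [Module K E] [Finite ι]
    {V : Submodule K E} {W : ι → Submodule K E} (hW : ∀ i, ¬ V ≤ W i) :
    ∃ v ∈ V, ∀ i, v ∉ W i := by
  by_contra! hcover
  obtain ⟨i, hi⟩ := Subspace.exists_eq_top_of_iUnion_eq_univ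
    (p := fun i ↦ (W i).comap V.subtype)
    (Set.eq_univ_of_forall fun v ↦ Set.mem_iUnion.mpr (hcover v v.2))
  exact hW i (Submodule.comap_subtype_eq_top.mp hi)

variable {A : Type*} [CommRing A] [IsNoetherianRing A] [Algebra K A]

lemma exists_mem_isSMulRegular {M : Type*} [AddCommGroup M] [Module A M] [Module.Finite A M]
    {V : Submodule K A} {ℓ : A} (hℓ : IsSMulRegular M ℓ)
    (hV : ∀ p : Ideal A, p.IsPrime → (V : Set A) ⊆ p → ℓ ∈ p) :
    ∃ g ∈ V, IsSMulRegular M g := by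
  have hunion := biUnion_associatedPrimes_eq_compl_regular A M
  have : Finite (associatedPrimes A M) := associatedPrimes.finite A M
  obtain ⟨g, hgV, hg⟩ := exists_mem_forall_notMem_of_not_le (V := V)
    (W := fun p : associatedPrimes A M ↦ p.1.restrictScalars K) fun p hVp ↦ by
      have hℓp : ℓ ∈ ⋃ p ∈ associatedPrimes A M, (p : Set A) :=
        Set.mem_biUnion p.2 (hV p.1 p.2.isPrime hVp)
      rw [hunion] at hℓp
      exact hℓp hℓ
  refine ⟨g, hgV, not_not.mp fun hg' ↦ ?_⟩
  have hgp : g ∈ ⋃ p ∈ associatedPrimes A M, (p : Set A) := hunion ▸ hg'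
  obtain ⟨p, hp, hgp⟩ := Set.mem_iUnion₂.mp hgp
  exact hg ⟨p, hp⟩ hgp

end GenericElement

section Exchange

variable {K A : Type*} [Field K] [Infinite K] [CommRing A] [IsNoetherianRing A] [Algebra K A]
  {𝒜 : ℕ → Submodule K A} [GradedAlgebra 𝒜] [∀ d, FiniteDimensional K (𝒜 d)]
  {V : Submodule K A} {k D : ℕ}

lemma exists_mem_isWeaklyRegular_exchange (hk : 1 ≤ k) (hVk : V ≤ 𝒜 k) {ℓ : A} {rs : List A}
    (hV : ∀ p : Ideal A, p.IsPrime → (V : Set A) ⊆ p → ℓ ∈ p)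
    (hℓ : ℓ ∈ 𝒜 1) (hrs : ∀ r ∈ rs, ∃ i, 0 < i ∧ r ∈ 𝒜 i)
    (hreg : IsWeaklyRegular A (ℓ :: rs))
    (hD : ∀ d > D, ∀ x ∈ 𝒜 d, x ∈ Ideal.ofList (ℓ :: rs)) :
    ∃ g ∈ V, IsWeaklyRegular A (g :: rs) ∧
      ∀ d > D + (k - 1), ∀ x ∈ 𝒜 d, x ∈ Ideal.ofList (g :: rs) := by
  have hhom : (Ideal.ofList rs).IsHomogeneous 𝒜 :=
    Ideal.homogeneous_span 𝒜 _ fun r hr ↦ (hrs r hr).imp fun _ ↦ And.right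
  have hmove {r : A} {i : ℕ} (hi : 0 < i) (hr : r ∈ 𝒜 i) :
      IsWeaklyRegular A (r :: rs) ↔ IsWeaklyRegular A (rs ++ [r]) := by
    have hpos : ∀ s ∈ r :: rs, ∃ i, 0 < i ∧ s ∈ 𝒜 i :=
      List.forall_mem_cons.mpr ⟨⟨i, hi, hr⟩, hrs⟩
    have hperm : (rs ++ [r]).Perm (r :: rs) := List.perm_append_singleton r rs
    exact ⟨fun h ↦ isWeaklyRegular_perm_of_homogeneous h hperm.symm hpos,
      fun h ↦ isWeaklyRegular_perm_of_homogeneous h hperm fun s hs ↦ hpos s (hperm.subset hs)⟩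
  rw [hmove one_pos hℓ, isWeaklyRegular_concat_iff] at hreg
  obtain ⟨g, hgV, hg⟩ := exists_mem_isSMulRegular hreg.2 hV
  refine ⟨g, hgV, ?_, fun d hd ↦ ?_⟩
  · exact (hmove hk (hVk hgV)).mpr ((isWeaklyRegular_concat_iff rs g).mpr ⟨hreg.1, hg⟩)
  · have hcons (r : A) : Ideal.ofList (r :: rs) = Ideal.ofList rs ⊔ Ideal.span {r} := by
      rw [Ideal.ofList_cons, sup_comm]
    simp only [hcons] at hD ⊢
    exact mem_sup_span_singleton_of_isSMulRegular hhom hℓ hreg.2 (hVk hgV) hg hD (by omega)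

-- The elements of `ls` are exchanged one by one for elements of `V`, collected in `gs`.
lemma mem_span_of_isWeaklyRegular_append (hk : 1 ≤ k) (hVk : V ≤ 𝒜 k)
    (hV : ∀ p : Ideal A, p.IsPrime → (V : Set A) ⊆ p → (𝒜 1 : Set A) ⊆ p)
    {gs ls : List A} (hgs : ∀ g ∈ gs, g ∈ V) (hls : ∀ ℓ ∈ ls, ℓ ∈ 𝒜 1)
    (hreg : IsWeaklyRegular A (gs ++ ls))
    (hD : ∀ d > D, ∀ x ∈ 𝒜 d, x ∈ Ideal.ofList (gs ++ ls)) :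
    ∀ d > D + ls.length * (k - 1), ∀ x ∈ 𝒜 d, x ∈ Ideal.span (V : Set A) := by
  induction ls generalizing gs D with
  | nil =>
    intro d hd x hx
    have hx' := hD d (by simpa using hd) x hx
    rw [List.append_nil] at hx'
    exact Ideal.span_mono hgs hx'
  | cons ℓ ls ih =>
    obtain ⟨hℓ, hls⟩ := List.forall_mem_cons.mp hls
    have hperm : (gs ++ ℓ :: ls).Perm (ℓ :: (gs ++ ls)) := List.perm_middle
    have hpos : ∀ r ∈ gs ++ ls, ∃ i, 0 < i ∧ r ∈ 𝒜 i :=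
      List.forall_mem_append.mpr
        ⟨fun g hg ↦ ⟨k, hk, hVk (hgs g hg)⟩, fun ℓ' hℓ' ↦ ⟨1, one_pos, hls ℓ' hℓ'⟩⟩
    have hreg' := isWeaklyRegular_perm_of_homogeneous hreg hperm fun r hr ↦
      List.forall_mem_cons.mpr ⟨⟨1, one_pos, hℓ⟩, hpos⟩ r (hperm.subset hr)
    have hofList : Ideal.ofList (gs ++ ℓ :: ls) = Ideal.ofList (ℓ :: (gs ++ ls)) :=
      congrArg Ideal.span (Set.ext fun r ↦ hperm.mem_iff)
    obtain ⟨g, hgV, hgreg, hgD⟩ := exists_mem_isWeaklyRegular_exchange hk hVk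
      (fun p hp hVp ↦ hV p hp hVp hℓ) hℓ hpos hreg' (hofList ▸ hD)
    intro d hd
    refine ih (gs := g :: gs) (List.forall_mem_cons.mpr ⟨hgV, hgs⟩) hls hgreg hgD d ?_
    rw [List.length_cons] at hd
    linarith

end Exchange

section Macaulay

attribute [local instance] MvPolynomial.gradedAlgebra

variable {σ R : Type*} [CommRing R]

variable (R) in
lemma ofList_map_X (L : List σ) :
    Ideal.ofList (L.map (X : σ → MvPolynomial σ R)) = Ideal.span (X '' {i | i ∈ L}) :=
  congrArg Ideal.span (Set.ext fun _ ↦ by simp)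

lemma isSMulRegular_quotient_span_X_image {s : Set σ} {i : σ} (hi : i ∉ s) :
    IsSMulRegular (MvPolynomial σ R ⧸ Ideal.span (X '' s : Set (MvPolynomial σ R)))
      (X i : MvPolynomial σ R) := by
  refine (isSMulRegular_quotient_iff_mem_of_smul_mem _ _).mpr fun F hF ↦ ?_
  rw [smul_eq_mul, mem_ideal_span_X_image, support_X_mul, Finset.forall_mem_map] at hF
  refine mem_ideal_span_X_image.mpr fun m hm ↦ (hF m hm).imp fun j hj ↦ ⟨hj.1, ?_⟩
  have hij : i ≠ j := fun h ↦ hi (h ▸ hj.1)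
  simpa [Finsupp.single_eq_of_ne' hij] using hj.2

lemma isWeaklyRegular_map_X {L : List σ} (hL : L.Nodup) :
    IsWeaklyRegular (MvPolynomial σ R) (L.map (X : σ → MvPolynomial σ R)) := by
  induction L using List.reverseRecOn with
  | nil => exact .nil _ _
  | append_singleton L i ih =>
    obtain ⟨hi, hL⟩ := List.nodup_concat L i |>.mp (List.concat_eq_append ▸ hL)
    rw [List.map_append, List.map_singleton, isWeaklyRegular_concat_iff, ofList_map_X R]
    exact ⟨ih hL, isSMulRegular_quotient_span_X_image hi⟩

lemma mem_idealOfVars_of_isHomogeneous {F : MvPolynomial σ R} {d : ℕ} (hF : F.IsHomogeneous d)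
    (hd : 0 < d) : F ∈ idealOfVars σ R := by
  rw [idealOfVars, ← Set.image_univ]
  refine mem_ideal_span_X_image.mpr fun m hm ↦ ?_
  by_contra! hzero
  have hm0 : m = 0 := Finsupp.ext fun i ↦ hzero i trivial
  have hdeg := hF (mem_support_iff.mp hm)
  rw [hm0, map_zero] at hdeg
  exact hd.ne hdeg

variable {K : Type*} [Field K] [IsAlgClosed K]

lemma idealOfVars_le_of_forall_zero_eq_zero [Finite σ] {s : Set (MvPolynomial σ K)}
    (hs : ∀ v : σ → K, (∀ g ∈ s, eval v g = 0) → v = 0) {p : Ideal (MvPolynomial σ K)}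
    (hp : p.IsPrime) (hsp : s ⊆ p) : idealOfVars σ K ≤ p := by
  rw [← IsPrime.vanishingIdeal_zeroLocus (K := K) p, idealOfVars, Ideal.span_le]
  rintro _ ⟨i, rfl⟩ v hv
  have hv0 : v = 0 := hs v fun g hg ↦ hv g (hsp hg)
  rw [aeval_X, hv0, Pi.zero_apply]

theorem mem_span_of_forall_zero_eq_zero [Fintype σ] {k d : ℕ} (hk : 1 ≤ k)
    {s : Set (MvPolynomial σ K)} (hsk : ∀ g ∈ s, g.IsHomogeneous k)
    (hs : ∀ v : σ → K, (∀ g ∈ s, eval v g = 0) → v = 0)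
    (hd : Fintype.card σ * (k - 1) < d) {F : MvPolynomial σ K} (hF : F.IsHomogeneous d) :
    F ∈ Ideal.span s := by
  have hfin (d : ℕ) : FiniteDimensional K (homogeneousSubmodule σ K d) :=
    Module.Finite.iff_fg.mpr (homogeneousSubmodule_fg σ K d)
  let vars : List (MvPolynomial σ K) := Finset.univ.toList.map X
  have hvars : Ideal.ofList vars = idealOfVars σ K := by
    simp [vars, ofList_map_X, idealOfVars]
  have hpos : ∀ d > 0, ∀ F ∈ homogeneousSubmodule σ K d, F ∈ Ideal.ofList vars :=
    fun d hd F hF ↦ hvars ▸ mem_idealOfVars_of_isHomogeneous hF hd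
  have hprime : ∀ p : Ideal (MvPolynomial σ K), p.IsPrime →
      (Submodule.span K s : Set (MvPolynomial σ K)) ⊆ p →
      (homogeneousSubmodule σ K 1 : Set (MvPolynomial σ K)) ⊆ p := fun p hp hsp _ hℓ ↦
    idealOfVars_le_of_forall_zero_eq_zero hs hp (Submodule.subset_span.trans hsp)
      (mem_idealOfVars_of_isHomogeneous hℓ one_pos)
  have hspan := mem_span_of_isWeaklyRegular_append (𝒜 := homogeneousSubmodule σ K)
    (V := Submodule.span K s) (gs := []) (ls := vars) hk
    (Submodule.span_le.mpr hsk) hprime (by simp) (by simp [vars, isHomogeneous_X])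
    (isWeaklyRegular_map_X (Finset.nodup_toList _)) hpos d (by simpa [vars] using hd) F hF
  rwa [Ideal.span, Submodule.span_span_of_tower] at hspan

end Macaulay

section Points

attribute [local instance] MvPolynomial.gradedAlgebra

variable {K σ : Type*} [Field K]

lemma eval_smul_of_isHomogeneous {F : MvPolynomial σ K} {d : ℕ} (hF : F.IsHomogeneous d) (a : K)
    (v : σ → K) : eval (a • v) F = a ^ d * eval v F := by
  rw [eval_eq, eval_eq, Finset.mul_sum]
  refine Finset.sum_congr rfl fun m hm ↦ ?_
  have hdeg : ∑ i ∈ m.support, m i = d := by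
    rw [← hF (mem_support_iff.mp hm)]
    exact Finsupp.degree_eq_weight_one (R := ℕ) ▸ rfl
  simp only [Pi.smul_apply, smul_eq_mul, mul_pow, Finset.prod_mul_distrib,
    Finset.prod_pow_eq_pow_sum, hdeg]
  ring

lemma eval_rep_mk_eq_zero_iff {F : MvPolynomial σ K} {d : ℕ} (hF : F.IsHomogeneous d) {v : σ → K}
    (hv : v ≠ 0) : eval (Projectivization.mk K v hv).rep F = 0 ↔ eval v F = 0 := by
  obtain ⟨a, ha⟩ := Projectivization.exists_smul_eq_mk_rep K v hv
  rw [← ha, Units.smul_def, eval_smul_of_isHomogeneous hF]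
  simp

lemma exists_linear_form_forall_eval_ne_zero [Infinite K] {ι : Type*} [Finite ι] {v : ι → σ → K}
    (hv : ∀ i, v i ≠ 0) : ∃ ℓ : MvPolynomial σ K, ℓ.IsHomogeneous 1 ∧ ∀ i, eval (v i) ℓ ≠ 0 := by
  refine exists_mem_forall_notMem_of_not_le (V := homogeneousSubmodule σ K 1)
    (W := fun i ↦ LinearMap.ker (aeval (v i)).toLinearMap) fun i hle ↦ ?_
  obtain ⟨j, hj⟩ := Function.ne_iff.mp (hv i)
  have hX : aeval (v i) (X j : MvPolynomial σ K) = 0 := hle (isHomogeneous_X K j)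
  exact hj ((aeval_X (v i) j).symm.trans hX)

lemma exists_linear_form_eval_eq_zero_of_ne {P Q : ℙ K (σ → K)} (hQP : Q ≠ P) :
    ∃ ℓ : MvPolynomial σ K, ℓ.IsHomogeneous 1 ∧ eval Q.rep ℓ = 0 ∧ eval P.rep ℓ ≠ 0 := by
  obtain ⟨j, hj⟩ := Function.ne_iff.mp Q.rep_nonzero
  have hminor : ∃ i, Q.rep j * P.rep i - Q.rep i * P.rep j ≠ 0 := by
    by_contra! hzero
    refine hQP.symm ?_
    rw [← P.mk_rep, ← Q.mk_rep, Projectivization.mk_eq_mk_iff']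
    refine ⟨P.rep j / Q.rep j, funext fun i ↦ ?_⟩
    rw [Pi.smul_apply, smul_eq_mul, div_mul_eq_mul_div, div_eq_iff hj]
    linear_combination -hzero i
  obtain ⟨i, hi⟩ := hminor
  refine ⟨C (Q.rep j) * X i - C (Q.rep i) * X j,
    (isHomogeneous_C_mul_X _ i).sub (isHomogeneous_C_mul_X _ j), ?_, ?_⟩
  · simp [mul_comm]
  · simpa using hi

/-- Some form of degree `d` vanishes at every point of `S` except `P`, and not at `P`. -/
def HasSeparator (S : Set (ℙ K (σ → K))) (P : ℙ K (σ → K)) (d : ℕ) : Prop :=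
  ∃ F : MvPolynomial σ K, F.IsHomogeneous d ∧
    (∀ Q ∈ S, Q ≠ P → eval Q.rep F = 0) ∧ eval P.rep F ≠ 0

variable {S : Set (ℙ K (σ → K))} {P : ℙ K (σ → K)} {d k : ℕ}

lemma exists_hasSeparator_add_mul (hS : S.Finite) (P : ℙ K (σ → K)) (d : ℕ) (hk : 1 ≤ k) :
    ∃ m, HasSeparator S P (d + m * k) := by
  induction S, hS using Set.Finite.induction_on with
  | empty =>
    obtain ⟨j, hj⟩ := Function.ne_iff.mp P.rep_nonzero
    refine ⟨0, X j ^ d, ?_, by simp, by simpa using fun h ↦ absurd h hj⟩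
    simpa using isHomogeneous_X_pow j d
  | @insert Q S _ _ ih =>
    obtain ⟨m, F, hF, hFS, hFP⟩ := ih
    rcases eq_or_ne Q P with rfl | hQP
    · exact ⟨m, F, hF, fun R hR hRQ ↦ hFS R (hR.resolve_left hRQ) hRQ, hFP⟩
    obtain ⟨ℓ, hℓ, hℓQ, hℓP⟩ := exists_linear_form_eval_eq_zero_of_ne hQP
    refine ⟨m + 1, F * ℓ ^ k, ?_, ?_, ?_⟩
    · simpa [add_one_mul, add_assoc] using hF.mul (hℓ.pow k)
    · rintro R (rfl | hR) hRP
      · simp [hℓQ, Nat.one_le_iff_ne_zero.mp hk]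
      · rw [map_mul, hFS R hR hRP, zero_mul]
    · rw [map_mul, map_pow]
      exact mul_ne_zero hFP (pow_ne_zero k hℓP)

variable {s : Set (MvPolynomial σ K)}

lemma eq_zero_of_forall_mem_insert_eval_eq_zero (hsk : ∀ g ∈ s, g.IsHomogeneous k)
    {h : MvPolynomial σ K} {e : ℕ} (hh : h.IsHomogeneous e)
    (hne : ∀ p : ℙ K (σ → K), (∀ g ∈ s, eval p.rep g = 0) → eval p.rep h ≠ 0) {v : σ → K}
    (hv : ∀ g ∈ insert h s, eval v g = 0) : v = 0 := by
  by_contra hv0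
  refine hne (.mk K v hv0) (fun g hg ↦ ?_) ?_
  · exact (eval_rep_mk_eq_zero_iff (hsk g hg) hv0).mpr (hv g (Set.mem_insert_of_mem h hg))
  · exact (eval_rep_mk_eq_zero_iff hh hv0).mpr (hv h (Set.mem_insert h s))

lemma HasSeparator.of_add [Fintype σ] [IsAlgClosed K] (hk : 1 ≤ k) (hfin : S.Finite)
    (hsk : ∀ g ∈ s, g.IsHomogeneous k) (hS : S = {p | ∀ g ∈ s, eval p.rep g = 0})
    (hP : P ∈ S) (hd : Fintype.card σ * (k - 1) < d + k)
    (hsep : HasSeparator S P (d + k)) : HasSeparator S P d := by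
  obtain ⟨F, hF, hFS, hFP⟩ := hsep
  have : Finite S := hfin
  obtain ⟨ℓ, hℓ, hℓS⟩ := exists_linear_form_forall_eval_ne_zero
    (v := fun p : S ↦ p.1.rep) fun p ↦ p.1.rep_nonzero
  have hℓk : (ℓ ^ k).IsHomogeneous k := by simpa using hℓ.pow k
  have hℓkS : ∀ Q ∈ S, eval Q.rep (ℓ ^ k) ≠ 0 := fun Q hQ ↦ by
    rw [map_pow]
    exact pow_ne_zero k (hℓS ⟨Q, hQ⟩)
  have hmem : F ∈ Ideal.span s ⊔ Ideal.span {ℓ ^ k} := by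
    rw [sup_comm, ← Ideal.span_insert]
    refine mem_span_of_forall_zero_eq_zero hk (Set.forall_mem_insert.mpr ⟨hℓk, hsk⟩)
      (fun v ↦ ?_) hd hF
    exact eq_zero_of_forall_mem_insert_eval_eq_zero hsk hℓk fun p hp ↦ hℓkS p (hS ▸ hp)
  obtain ⟨c, hc, hFc⟩ := exists_sub_mul_mem_of_mem_sup_span_singleton
    (Ideal.homogeneous_span (homogeneousSubmodule σ K) s fun g hg ↦ ⟨k, hsk g hg⟩) hℓk hF hmem
  have heval : ∀ Q ∈ S, eval Q.rep F = eval Q.rep (ℓ ^ k) * eval Q.rep c := fun Q hQ ↦ by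
    have hle : Ideal.span s ≤ RingHom.ker (eval Q.rep) := Ideal.span_le.mpr (hS ▸ hQ :)
    have hzero : eval Q.rep (F - ℓ ^ k * c) = 0 := hle hFc
    rwa [map_sub, map_mul, sub_eq_zero] at hzero
  refine ⟨c, hc, fun Q hQ hQP ↦ ?_, right_ne_zero_of_mul (heval P hP ▸ hFP)⟩
  have hprod := (heval Q hQ).symm.trans (hFS Q hQ hQP)
  exact (mul_eq_zero.mp hprod).resolve_left (hℓkS Q hQ)

end Points

theorem stmt_5_general {K : Type*} [Field K] [IsAlgClosed K] {N k d : ℕ} (hk : 1 ≤ k)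
    (hd : N * (k - 1) ≤ d) {S : Set (ℙ K (Fin (N + 1) → K))} (hfin : S.Finite)
    {Fam : Set (MvPolynomial (Fin (N + 1)) K)} (hFamHom : ∀ g ∈ Fam, g.IsHomogeneous k)
    (hS : S = {p | ∀ g ∈ Fam, eval p.rep g = 0}) {P : ℙ K (Fin (N + 1) → K)} (hP : P ∈ S) :
    HasSeparator S P d := by
  have hbound (m : ℕ) : Fintype.card (Fin (N + 1)) * (k - 1) < d + m * k + k := by
    rw [Fintype.card_fin, add_one_mul]
    omega
  obtain ⟨m, hm⟩ := exists_hasSeparator_add_mul hfin P d hk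
  induction m with
  | zero => simpa using hm
  | succ m ih =>
    rw [add_one_mul, ← add_assoc] at hm
    exact ih (hm.of_add hk hfin hFamHom hS hP (hbound m))

theorem stmt_5 (n k : ℕ) (hk : 1 ≤ k) (hkn : 2 * k < n)
    (S : Set (ProjPt 4)) (hfin : S.Finite)
    (Fam : Set (MvPolynomial (Fin 5) ℂ))
    (hFamHom : ∀ g ∈ Fam, g.IsHomogeneous k)
    (hS : S = {p : ProjPt 4 | ∀ g ∈ Fam, VanishesAt g p}) :
    ∀ P ∈ S, ∃ F : MvPolynomial (Fin 5) ℂ,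
      F.IsHomogeneous (2 * n - 5) ∧
      (∀ Q ∈ S, Q ≠ P → VanishesAt F Q) ∧ ¬ VanishesAt F P := by
  intro P hP
  exact stmt_5_general hk (by omega : 4 * (k - 1) ≤ 2 * n - 5) hfin hFamHom hS hP
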